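/- Let x, y, z be points of a CAT(0) space with x ≠ y and x ≠ z, and let c(t) parametrize the geodesic [x,y] with c(0) = x. Then lim_{t→0} ∠_{c(t)}(x,z) = lim_{t→0} ∠̄_{c(t)}(x,z) = π − ∠_x(y,z). -/

import Mathlib

noncomputable section

open Metric Set Filter Real Pointwise

/-! ## Geodesics and CAT(0) spaces -/

variable {X : Type*}

/-- A geodesic segment from `x` to `y`, parametrized by arclength on `[0, dist x y]`. -/
def IsGeodesicSegment [MetricSpace X] (f : ℝ → X) (x y : X) : Prop :=
  f 0 = x ∧ f (dist x y) = y ∧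
    ∀ s ∈ Set.Icc (0:ℝ) (dist x y), ∀ t ∈ Set.Icc (0:ℝ) (dist x y),
      dist (f s) (f t) = |s - t|

/-- A geodesic metric space: every pair of points is joined by a geodesic. -/
def GeodesicSpace (X : Type*) [MetricSpace X] : Prop :=
  ∀ x y : X, ∃ f : ℝ → X, IsGeodesicSegment f x y

/-- A CAT(0) space: a geodesic space satisfying the CN-inequality of Bruhat–Tits
(equivalent to the CAT(0) comparison inequality for complete geodesic spaces). -/
def CAT0Space (X : Type*) [MetricSpace X] : Prop :=
  GeodesicSpace X ∧
    ∀ x y z m : X, dist y m = dist y z / 2 → dist z m = dist y z / 2 →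
      dist x m ^ 2 ≤ (dist x y ^ 2 + dist x z ^ 2) / 2 - dist y z ^ 2 / 4

/-- The geodesic segment `[x,y]` (as a set) in a uniquely geodesic space:
the set of points lying between `x` and `y`. -/
def geodesicSegSet [MetricSpace X] (x y : X) : Set X :=
  {z : X | dist x z + dist z y = dist x y}

/-- A complete geodesic line, parametrized by arclength. -/
def IsGeodesicLine [MetricSpace X] (c : ℝ → X) : Prop :=
  ∀ s t : ℝ, dist (c s) (c t) = |s - t|

/-- A geodesic ray, parametrized by arclength on `[0,∞)`. -/
def IsGeodesicRay [MetricSpace X] (c : ℝ → X) : Prop :=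
  ∀ s t : ℝ, 0 ≤ s → 0 ≤ t → dist (c s) (c t) = |s - t|

/-- A subset `A` is geodesic if any two of its points are joined by a geodesic inside `A`. -/
def IsGeodesicSubset [MetricSpace X] (A : Set X) : Prop :=
  ∀ x ∈ A, ∀ y ∈ A, ∃ f : ℝ → X, IsGeodesicSegment f x y ∧
    ∀ t ∈ Set.Icc (0:ℝ) (dist x y), f t ∈ A

/-! ## Angles -/

/-- The comparison angle at `p` of the triple `(p,x,y)`: the angle at the vertex corresponding
to `p` in a Euclidean comparison triangle, computed by the law of cosines. -/
def cangle [MetricSpace X] (p x y : X) : ℝ :=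
  Real.arccos ((dist p x ^ 2 + dist p y ^ 2 - dist x y ^ 2) / (2 * dist p x * dist p y))

/-- The (Alexandrov) angle at `p` between the geodesics `[p,x]` and `[p,y]`.  In a CAT(0)
space comparison angles are monotone along the geodesics, so the Alexandrov angle is the
infimum of the comparison angles over interior points of the two segments. -/
def angle [MetricSpace X] (p x y : X) : ℝ :=
  sInf {θ : ℝ | ∃ x' ∈ geodesicSegSet p x, ∃ y' ∈ geodesicSegSet p y,
    x' ≠ p ∧ y' ≠ p ∧ θ = cangle p x' y'}

/-! ## Flats -/

/-- A `k`-flat: an isometrically embedded copy of Euclidean `k`-space. -/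
def IsKFlat [MetricSpace X] (k : ℕ) (F : Set X) : Prop :=
  ∃ f : EuclideanSpace ℝ (Fin k) → X, Isometry f ∧ Set.range f = F

/-- A flat: an isometrically embedded copy of Euclidean `k`-space for some `k ≥ 2`. -/
def IsFlat [MetricSpace X] (F : Set X) : Prop := ∃ k : ℕ, 2 ≤ k ∧ IsKFlat k F

/-- A flat is maximal if it is not contained in a finite tubular neighborhood of a
higher-dimensional flat. -/
def IsMaximalFlat [MetricSpace X] (F : Set X) : Prop :=
  IsFlat F ∧ ¬ ∃ (k k' : ℕ) (F' : Set X) (r : ℝ),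
    IsKFlat k F ∧ IsKFlat k' F' ∧ k < k' ∧ F ⊆ Metric.cthickening r F'

/-! ## Geometric group actions -/

/-- A geometric action: an action by isometries that is properly discontinuous and cocompact. -/
def GeometricAction (Γ X : Type*) [Group Γ] [MetricSpace X] [MulAction Γ X] : Prop :=
  (∀ g : Γ, Isometry fun x : X => g • x) ∧
  (∀ K L : Set X, IsCompact K → IsCompact L → {g : Γ | ((g • K) ∩ L).Nonempty}.Finite) ∧
  ∃ K : Set X, IsCompact K ∧ ⋃ g : Γ, g • K = Set.univ

/-! ## Isolated flats (IF2) -/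

/-- The family `𝓕` witnesses that `X` has isolated flats (formulation (IF2)):
`𝓕` is a `Γ`-invariant family of flats, every flat of `X` lies in a uniformly bounded
tubular neighborhood of a member of `𝓕`, and `ρ`-tubular neighborhoods of distinct members
of `𝓕` have uniformly bounded overlap. -/
structure IsolatedFlatsFamily (Γ : Type*) {X : Type*} [Group Γ] [MetricSpace X]
    [MulAction Γ X] (𝓕 : Set (Set X)) : Prop where
  flats : ∀ F ∈ 𝓕, IsFlat F
  invariant : ∀ (g : Γ), ∀ F ∈ 𝓕, g • F ∈ 𝓕
  exists_bound : ∃ D : ℝ, ∀ F : Set X, IsFlat F → ∃ F' ∈ 𝓕, F ⊆ Metric.cthickening D F'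
  isolated : ∀ ρ : ℝ, ∃ κ : ℝ, ∀ F ∈ 𝓕, ∀ F' ∈ 𝓕, F ≠ F' →
    Metric.diam (Metric.cthickening ρ F ∩ Metric.cthickening ρ F') < κ

/-- `X` has isolated flats (with respect to some family). -/
def HasIsolatedFlats (Γ X : Type*) [Group Γ] [MetricSpace X] [MulAction Γ X] : Prop :=
  ∃ 𝓕 : Set (Set X), IsolatedFlatsFamily Γ 𝓕
/-! ## The ideal boundary and the Tits metric -/

/-- The space of geodesic rays in `X`. -/
abbrev GeodesicRays (X : Type*) [MetricSpace X] := {c : ℝ → X // IsGeodesicRay c}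

/-- Two rays are asymptotic if they are at bounded distance. -/
def asympSetoid (X : Type*) [MetricSpace X] : Setoid (GeodesicRays X) where
  r c c' := ∃ K : ℝ, ∀ t : ℝ, 0 ≤ t → dist (c.1 t) (c'.1 t) ≤ K
  iseqv := by
    refine ⟨fun c => ⟨0, fun t _ => by simp⟩, ?_, ?_⟩
    · rintro c c' ⟨K, hK⟩
      exact ⟨K, fun t ht => by rw [dist_comm]; exact hK t ht⟩
    · rintro a b c ⟨K, hK⟩ ⟨K', hK'⟩
      exact ⟨K + K', fun t ht =>
        (dist_triangle _ (b.1 t) _).trans (add_le_add (hK t ht) (hK' t ht))⟩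

/-- The ideal boundary of `X`: asymptoty classes of geodesic rays. -/
def IdealBoundary (X : Type*) [MetricSpace X] := Quotient (asympSetoid X)

/-- The angle at `p` between two geodesic rays `c, c'` issuing from `p`: in a CAT(0) space
this is the infimum (= decreasing limit) of comparison angles of points along the rays. -/
def rayAngleAt [MetricSpace X] (p : X) (c c' : ℝ → X) : ℝ :=
  sInf {θ : ℝ | ∃ t > (0:ℝ), ∃ t' > (0:ℝ), θ = cangle p (c t) (c' t')}

/-- The angle `∠_p(ξ,η)` at a point `p` between two ideal boundary points, computed using
geodesic rays from `p` representing them. -/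
def angleAtBetween [MetricSpace X] (p : X) (ξ η : IdealBoundary X) : ℝ :=
  sSup {θ : ℝ | ∃ c c' : GeodesicRays X, c.1 0 = p ∧ c'.1 0 = p ∧
    Quotient.mk (asympSetoid X) c = ξ ∧ Quotient.mk (asympSetoid X) c' = η ∧
    θ = rayAngleAt p c.1 c'.1}

/-- The Tits angle metric `∠_T(ξ,η) = sup_p ∠_p(ξ,η)` on the ideal boundary. -/
def titsAngle [MetricSpace X] (ξ η : IdealBoundary X) : ℝ :=
  sSup (Set.range fun p : X => angleAtBetween p ξ η)

/-- The topology induced by the Tits angle metric on the ideal boundary.  (On a proper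
CAT(0) space the Tits angle metric and the Tits length metric `Td` induce the same
topology, and the same isometry types of components consisting of spheres.) -/
def titsTopology (X : Type*) [MetricSpace X] : TopologicalSpace (IdealBoundary X) :=
  TopologicalSpace.generateFrom
    {U : Set (IdealBoundary X) | ∃ (ξ : IdealBoundary X) (ε : ℝ), U = {η | titsAngle ξ η < ε}}

/-- A subset of the Tits boundary is a standard Euclidean sphere if it is isometric (in the
Tits metric) to the unit sphere of a Euclidean space `E^k` with its angular metric. -/
def IsStandardSphere [MetricSpace X] (C : Set (IdealBoundary X)) : Prop :=
  ∃ k : ℕ, 1 ≤ k ∧ ∃ e : IdealBoundary X → EuclideanSpace ℝ (Fin k),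
    (∀ ξ ∈ C, ‖e ξ‖ = 1) ∧
    (∀ v : EuclideanSpace ℝ (Fin k), ‖v‖ = 1 → ∃ ξ ∈ C, e ξ = v) ∧
    Set.InjOn e C ∧
    ∀ ξ ∈ C, ∀ η ∈ C, titsAngle ξ η = Real.arccos (inner ℝ (e ξ) (e η) : ℝ)

/-- Every connected component of the Tits boundary of `X` is an isolated point or a
standard Euclidean sphere. -/
def TitsBoundaryIsolatedOrSpheres (X : Type*) [MetricSpace X] : Prop :=
  ∀ ξ : IdealBoundary X,
    (@connectedComponent _ (titsTopology X) ξ = {ξ} ∧ @IsOpen _ (titsTopology X) {ξ}) ∨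
    IsStandardSphere (@connectedComponent _ (titsTopology X) ξ)

/-- The trace at infinity of a subset `Y ⊆ X`: ideal points represented by rays inside `Y`. -/
def boundaryOfSet [MetricSpace X] (Y : Set X) : Set (IdealBoundary X) :=
  {ξ | ∃ c : GeodesicRays X, Quotient.mk (asympSetoid X) c = ξ ∧ ∀ t : ℝ, 0 ≤ t → c.1 t ∈ Y}
/-! ## Ultrafilters, ultralimits, and asymptotic cones -/

/-- A nonprincipal ultrafilter on `ℕ`. -/
def IsNonprincipal (ω : Ultrafilter ℕ) : Prop := ∀ s : Set ℕ, s.Finite → s ∉ ω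

/-- A real sequence that is bounded along an ultrafilter converges along that
ultrafilter to its `limUnder`. -/
theorem tendsto_limUnder_of_bdd (ω : Ultrafilter ℕ) {u : ℕ → ℝ} {C : ℝ}
    (h : ∀ᶠ n in (ω : Filter ℕ), |u n| ≤ C) :
    Filter.Tendsto u (ω : Filter ℕ) (nhds (limUnder (ω : Filter ℕ) u)) := by
  have hC : 0 ≤ C := by
    obtain ⟨n, hn⟩ := h.exists
    exact (abs_nonneg _).trans hn
  set u' : ℕ → ℝ := fun n => max (-C) (min C (u n)) with hu'
  have hmem : ∀ n, u' n ∈ Set.Icc (-C) C := fun n =>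
    ⟨le_max_left _ _, max_le (by linarith) ((min_le_left _ _))⟩
  have hle : (Ultrafilter.map u' ω : Filter ℝ) ≤ Filter.principal (Set.Icc (-C) C) := by
    rw [Filter.le_principal_iff]
    exact Filter.mem_map.2 (Filter.Eventually.of_forall fun n => hmem n)
  obtain ⟨a, -, ha⟩ := (isCompact_Icc (a := -C) (b := C)).ultrafilter_le_nhds
    (Ultrafilter.map u' ω) hle
  have htu' : Filter.Tendsto u' (ω : Filter ℕ) (nhds a) := ha
  have heq : u' =ᶠ[(ω : Filter ℕ)] u := by
    filter_upwards [h] with n hn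
    have h1 : -C ≤ u n := neg_le_of_abs_le hn
    have h2 : u n ≤ C := le_of_abs_le hn
    simp [hu', min_eq_right h2, max_eq_right h1]
  have htu : Filter.Tendsto u (ω : Filter ℕ) (nhds a) := htu'.congr' heq
  rwa [htu.limUnder_eq]

section Ultralimit

variable (Xs : ℕ → Type*) [∀ n, MetricSpace (Xs n)] (ω : Ultrafilter ℕ)
  (b : ∀ n, Xs n) (l : ℕ → ℝ)

/-- A sequence of points `u n ∈ Xs n` whose rescaled distance to the basepoints is
bounded along `ω`. -/
structure BddSeq where
  seq : ∀ n, Xs n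
  bdd : ∃ C : ℝ, ∀ᶠ n in (ω : Filter ℕ), dist (seq n) (b n) ≤ C * l n

variable (hl : ∀ᶠ n in (ω : Filter ℕ), 0 < l n)

/-- Two sequences represent the same point of the ultralimit when their rescaled
distance tends to zero along `ω`. -/
def ulimSetoid : Setoid (BddSeq Xs ω b l) where
  r u v := ∀ ε : ℝ, 0 < ε → ∀ᶠ n in (ω : Filter ℕ), dist (u.seq n) (v.seq n) ≤ ε * l n
  iseqv := by
    refine ⟨fun u ε hε => ?_, fun {u v} h ε hε => ?_, fun {u v w} h h' ε hε => ?_⟩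
    · filter_upwards [hl] with n hn
      simp [le_of_lt (mul_pos hε hn)]
    · filter_upwards [h ε hε] with n hn
      rwa [dist_comm]
    · filter_upwards [h (ε/2) (by linarith), h' (ε/2) (by linarith)] with n h1 h2
      calc dist (u.seq n) (w.seq n) ≤ dist (u.seq n) (v.seq n) + dist (v.seq n) (w.seq n) :=
            dist_triangle _ _ _
        _ ≤ ε/2 * l n + ε/2 * l n := add_le_add h1 h2
        _ = ε * l n := by ring

/-- The ultralimit `ω-lim (Xs n, dist / l n, b n)` of a sequence of based metric spaces,
rescaled by the scaling constants `l`.  (Asymptotic cones are the special case of a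
constant sequence of spaces with `l → ∞` along `ω`.) -/
def Ultralimit : Type _ := Quotient (ulimSetoid Xs ω b l hl)

variable {Xs ω b l}

theorem bddseq_dist_bdd (hl : ∀ᶠ n in (ω : Filter ℕ), 0 < l n) (x y : BddSeq Xs ω b l) :
    ∃ C : ℝ, ∀ᶠ n in (ω : Filter ℕ), |dist (x.seq n) (y.seq n) / l n| ≤ C := by
  obtain ⟨Cx, hCx⟩ := x.bdd
  obtain ⟨Cy, hCy⟩ := y.bdd
  refine ⟨|Cx| + |Cy|, ?_⟩
  filter_upwards [hCx, hCy, hl] with n h1 h2 h3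
  have hd : dist (x.seq n) (y.seq n) ≤ (|Cx| + |Cy|) * l n := by
    calc dist (x.seq n) (y.seq n) ≤ dist (x.seq n) (b n) + dist (y.seq n) (b n) :=
          dist_triangle_right _ _ _
      _ ≤ Cx * l n + Cy * l n := add_le_add h1 h2
      _ ≤ |Cx| * l n + |Cy| * l n := by
          gcongr <;> [exact le_abs_self Cx; exact le_abs_self Cy]
      _ = (|Cx| + |Cy|) * l n := by ring
  rw [abs_div, abs_of_nonneg dist_nonneg, abs_of_pos h3, div_le_iff₀ h3]
  exact hd

variable {hl}

/-- The distance on the ultralimit: the `ω`-limit of rescaled distances. -/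
def ulimDist (x y : Ultralimit Xs ω b l hl) : ℝ :=
  limUnder (ω : Filter ℕ) fun n => dist (x.out.seq n) (y.out.seq n) / l n

theorem ulimDist_tendsto (x y : Ultralimit Xs ω b l hl) :
    Filter.Tendsto (fun n => dist (x.out.seq n) (y.out.seq n) / l n) (ω : Filter ℕ)
      (nhds (ulimDist x y)) := by
  obtain ⟨C, hC⟩ := bddseq_dist_bdd hl x.out y.out
  exact tendsto_limUnder_of_bdd ω hC

theorem ulimDist_self (x : Ultralimit Xs ω b l hl) : ulimDist x x = 0 := by
  unfold ulimDist
  have : (fun n => dist (x.out.seq n) (x.out.seq n) / l n) = fun _ => (0:ℝ) := by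
    funext n; simp
  rw [this]
  exact Filter.Tendsto.limUnder_eq tendsto_const_nhds

theorem ulimDist_comm (x y : Ultralimit Xs ω b l hl) : ulimDist x y = ulimDist y x := by
  unfold ulimDist
  congr 1
  funext n
  rw [dist_comm]

theorem ulimDist_triangle (x y z : Ultralimit Xs ω b l hl) :
    ulimDist x z ≤ ulimDist x y + ulimDist y z := by
  refine le_of_tendsto_of_tendsto (ulimDist_tendsto x z)
    ((ulimDist_tendsto x y).add (ulimDist_tendsto y z)) ?_
  filter_upwards [hl] with n hn
  rw [← add_div]
  gcongr
  exact dist_triangle _ _ _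

theorem ulimDist_eq_zero {x y : Ultralimit Xs ω b l hl} (h : ulimDist x y = 0) : x = y := by
  have ht0 : Filter.Tendsto (fun n => dist (x.out.seq n) (y.out.seq n) / l n)
      (ω : Filter ℕ) (nhds 0) := h ▸ ulimDist_tendsto x y
  have hrel : (ulimSetoid Xs ω b l hl).r x.out y.out := by
    intro ε hε
    have := (Metric.tendsto_nhds.mp ht0) ε hε
    filter_upwards [this, hl] with n h1 h2
    rw [Real.dist_eq, sub_zero, abs_div, abs_of_nonneg dist_nonneg, abs_of_pos h2,
      div_lt_iff₀ h2] at h1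
    exact h1.le
  have : Quotient.mk (ulimSetoid Xs ω b l hl) x.out = Quotient.mk (ulimSetoid Xs ω b l hl) y.out :=
    Quot.sound hrel
  exact (Quotient.out_eq x).symm.trans (this.trans (Quotient.out_eq y))

/-- The ultralimit of a sequence of based metric spaces is a metric space. -/
instance ultralimitMetricSpace : MetricSpace (Ultralimit Xs ω b l hl) where
  dist := ulimDist
  dist_self := ulimDist_self
  dist_comm := ulimDist_comm
  dist_triangle := ulimDist_triangle
  eq_of_dist_eq_zero := ulimDist_eq_zero

end Ultralimit
section Cones

variable (X : Type*) [MetricSpace X] (ω : Ultrafilter ℕ) (b : ℕ → X) (l : ℕ → ℝ)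
  (hl : ∀ᶠ n in (ω : Filter ℕ), 0 < l n)

/-- The asymptotic cone `Cone_ω(X, b, l)`: the ultralimit of the based spaces
`(X, dist / l n, b n)`. -/
def AsymptoticCone : Type _ := Ultralimit (fun _ => X) ω b l hl

instance : MetricSpace (AsymptoticCone X ω b l hl) := ultralimitMetricSpace

/-- The `ω`-limit of a sequence of subsets `A n ⊆ X` inside the asymptotic cone. -/
def ulimSet (A : ℕ → Set X) : Set (AsymptoticCone X ω b l hl) :=
  {x | ∃ u : BddSeq (fun _ => X) ω b l, Quotient.mk (ulimSetoid (fun _ => X) ω b l hl) u = x ∧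
    ∀ᶠ n in (ω : Filter ℕ), u.seq n ∈ A n}

/-- The collection `𝓐_ω` of subsets of the asymptotic cone induced by a collection `𝓐`
of subsets of `X`: ultralimits of sequences in `𝓐` which stay at bounded rescaled
distance from the basepoints. -/
def coneFamily (𝓐 : Set (Set X)) : Set (Set (AsymptoticCone X ω b l hl)) :=
  {A | ∃ An : ℕ → Set X, (∀ n, An n ∈ 𝓐) ∧
    (∃ C : ℝ, ∀ᶠ n in (ω : Filter ℕ), ∃ p ∈ An n, dist p (b n) ≤ C * l n) ∧
    A = ulimSet X ω b l hl An}

end Cones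

/-! ## Tree-graded spaces and relative hyperbolicity -/

section TreeGraded

variable (Y : Type*) [MetricSpace Y]

/-- A simple geodesic triangle: a simple loop made of three geodesic segments. -/
def SimpleGeodesicTriangle (T : Set Y) : Prop :=
  ∃ (x y z : Y) (f g h : ℝ → Y),
    IsGeodesicSegment f x y ∧ IsGeodesicSegment g y z ∧ IsGeodesicSegment h z x ∧
    T = f '' Set.Icc 0 (dist x y) ∪ g '' Set.Icc 0 (dist y z) ∪ h '' Set.Icc 0 (dist z x) ∧
    f '' Set.Icc 0 (dist x y) ∩ g '' Set.Icc 0 (dist y z) = {y} ∧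
    g '' Set.Icc 0 (dist y z) ∩ h '' Set.Icc 0 (dist z x) = {z} ∧
    h '' Set.Icc 0 (dist z x) ∩ f '' Set.Icc 0 (dist x y) = {x}

/-- A complete geodesic space is tree-graded with respect to a collection `P` of closed
geodesic subsets (pieces) if distinct pieces meet in at most one point and every simple
geodesic triangle is contained in a single piece. -/
def IsTreeGraded (P : Set (Set Y)) : Prop :=
  (∀ A ∈ P, IsClosed A ∧ IsGeodesicSubset A) ∧
  (∀ A ∈ P, ∀ B ∈ P, A ≠ B → (A ∩ B).Subsingleton) ∧
  (∀ T : Set Y, SimpleGeodesicTriangle Y T → ∃ A ∈ P, T ⊆ A)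

end TreeGraded

/-- A metric space `X` is relatively hyperbolic with respect to a collection `𝓐` of
subsets if every asymptotic cone of `X` (over a nonprincipal ultrafilter, with scaling
constants tending to infinity along the ultrafilter) is tree-graded with respect to the
induced collection `𝓐_ω`. -/
def RelativelyHyperbolicSpace (X : Type*) [MetricSpace X] (𝓐 : Set (Set X)) : Prop :=
  ∀ (ω : Ultrafilter ℕ), IsNonprincipal ω →
    ∀ (b : ℕ → X) (l : ℕ → ℝ) (hl : Filter.Tendsto l (ω : Filter ℕ) Filter.atTop),
      IsTreeGraded (AsymptoticCone X ω b l (hl.eventually (Filter.eventually_gt_atTop 0)))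
        (coneFamily X ω b l (hl.eventually (Filter.eventually_gt_atTop 0)) 𝓐)
/-! ## Word metrics on groups -/

section WordMetric

variable {Γ : Type*} [Group Γ]

/-- The set of lengths of words over `S ∪ S⁻¹` representing `g`. -/
def wordLengthSet (S : Set Γ) (g : Γ) : Set ℕ :=
  {n : ℕ | ∃ w : List Γ, w.length = n ∧ (∀ x ∈ w, x ∈ S ∨ x⁻¹ ∈ S) ∧ w.prod = g}

/-- The word length of `g` with respect to the generating set `S`. -/
def wordLength (S : Set Γ) (g : Γ) : ℕ := sInf (wordLengthSet S g)

theorem wordLengthSet_nonempty {S : Set Γ} (hS : Subgroup.closure S = ⊤) (g : Γ) :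
    (wordLengthSet S g).Nonempty := by
  have hg : g ∈ Subgroup.closure S := hS ▸ Subgroup.mem_top g
  have hg' : g ∈ (Subgroup.closure S).toSubmonoid := hg
  rw [Subgroup.closure_toSubmonoid] at hg'
  obtain ⟨w, hw, hprod⟩ := Submonoid.exists_list_of_mem_closure hg'
  refine ⟨w.length, w, rfl, fun x hx => ?_, hprod⟩
  rcases hw x hx with h | h
  · exact Or.inl h
  · exact Or.inr (Set.mem_inv.mp h)

theorem wordLength_one (S : Set Γ) : wordLength S 1 = 0 :=
  Nat.eq_zero_of_le_zero (Nat.sInf_le ⟨[], rfl, by simp, by simp⟩)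

theorem wordLengthSet_inv_subset (S : Set Γ) (g : Γ) :
    wordLengthSet S g ⊆ wordLengthSet S g⁻¹ := by
  rintro n ⟨w, hlen, hmem, hprod⟩
  refine ⟨(w.map fun x => x⁻¹).reverse, by simp [hlen], ?_, ?_⟩
  · intro x hx
    simp only [List.mem_reverse, List.mem_map] at hx
    obtain ⟨a, ha, rfl⟩ := hx
    rcases hmem a ha with h' | h'
    · exact Or.inr (by simpa using h')
    · exact Or.inl h'
  · rw [← List.prod_inv_reverse, hprod]

theorem wordLengthSet_inv (S : Set Γ) (g : Γ) :
    wordLengthSet S g⁻¹ = wordLengthSet S g := by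
  refine le_antisymm ?_ (wordLengthSet_inv_subset S g)
  have := wordLengthSet_inv_subset S g⁻¹
  rwa [inv_inv] at this

theorem wordLength_inv (S : Set Γ) (g : Γ) : wordLength S g⁻¹ = wordLength S g := by
  unfold wordLength
  rw [wordLengthSet_inv]

theorem wordLength_mul {S : Set Γ} (hS : Subgroup.closure S = ⊤) (g h : Γ) :
    wordLength S (g * h) ≤ wordLength S g + wordLength S h := by
  obtain ⟨w1, hlen1, hmem1, hprod1⟩ := Nat.sInf_mem (wordLengthSet_nonempty hS g)
  obtain ⟨w2, hlen2, hmem2, hprod2⟩ := Nat.sInf_mem (wordLengthSet_nonempty hS h)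
  refine Nat.sInf_le ⟨w1 ++ w2, ?_, ?_, by simp [hprod1, hprod2]⟩
  · rw [List.length_append, hlen1, hlen2]; rfl
  · intro x hx
    rcases List.mem_append.mp hx with h' | h'
    · exact hmem1 x h'
    · exact hmem2 x h'

/-- The word metric on a group `Γ`, with respect to a generating set `S`. -/
def wordMetricSpace (Γ : Type*) [Group Γ] (S : Set Γ)
    (hS : Subgroup.closure S = ⊤) : MetricSpace Γ where
  dist g h := (wordLength S (g⁻¹ * h) : ℝ)
  dist_self g := by simp [wordLength_one]
  dist_comm g h := by
    show (wordLength S (g⁻¹ * h) : ℝ) = (wordLength S (h⁻¹ * g) : ℝ)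
    have := wordLength_inv S (g⁻¹ * h)
    rw [mul_inv_rev, inv_inv] at this
    rw [← this]
  dist_triangle g k h := by
    show (wordLength S (g⁻¹ * h) : ℝ) ≤ (wordLength S (g⁻¹ * k) : ℝ) + (wordLength S (k⁻¹ * h) : ℝ)
    have := wordLength_mul hS (g⁻¹ * k) (k⁻¹ * h)
    have h2 : g⁻¹ * k * (k⁻¹ * h) = g⁻¹ * h := by group
    rw [h2] at this
    exact_mod_cast this
  eq_of_dist_eq_zero := by
    intro g h hd
    have hd' : (wordLength S (g⁻¹ * h) : ℝ) = 0 := hd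
    have h0 : wordLength S (g⁻¹ * h) = 0 := by exact_mod_cast hd'
    rcases (Nat.sInf_eq_zero.mp h0) with h1 | h1
    · obtain ⟨w, hlen, -, hprod⟩ := h1
      have hw : w = [] := List.length_eq_zero_iff.mp hlen
      rw [hw] at hprod
      simp only [List.prod_nil] at hprod
      exact (inv_mul_eq_one.mp hprod.symm)
    · exact absurd h1 (wordLengthSet_nonempty hS _).ne_empty

end WordMetric
/-! ## Relatively hyperbolic groups (Bowditch, via the Druţu–Sapir characterization) -/

/-- A subgroup is virtually abelian of rank at least two if it contains a finite-index
free abelian subgroup of rank at least two. -/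
def IsVirtuallyAbelianOfRankAtLeastTwo {Γ : Type*} [Group Γ] (P : Subgroup Γ) : Prop :=
  ∃ H : Subgroup Γ, H ≤ P ∧ H.relIndex P ≠ 0 ∧
    ∃ k : ℕ, 2 ≤ k ∧ Nonempty (H ≃* Multiplicative (Fin k → ℤ))

/-- A subgroup is virtually abelian if it contains an abelian subgroup of finite index. -/
def IsVirtuallyAbelian {Γ : Type*} [Group Γ] (H : Subgroup Γ) : Prop :=
  ∃ A : Subgroup Γ, A ≤ H ∧ A.relIndex H ≠ 0 ∧ ∀ a ∈ A, ∀ b ∈ A, a * b = b * a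

/-- The left coset `gP` of a subgroup, as a subset of the group. -/
def leftCosetSet {Γ : Type*} [Group Γ] (g : Γ) (P : Subgroup Γ) : Set Γ :=
  {x : Γ | ∃ p ∈ P, x = g * p}

/-- `Γ` is a relatively hyperbolic group with respect to a collection of virtually abelian
subgroups of rank at least two: equipped with a word metric, `Γ` is relatively hyperbolic
as a metric space with respect to the left cosets of the subgroups. -/
def GroupRelHypVirtAbelian (Γ : Type*) [Group Γ] : Prop :=
  ∃ (S : Finset Γ) (hS : Subgroup.closure (S : Set Γ) = ⊤) (𝓐 : Set (Subgroup Γ)),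
    (∀ P ∈ 𝓐, IsVirtuallyAbelianOfRankAtLeastTwo P) ∧
    @RelativelyHyperbolicSpace Γ (wordMetricSpace Γ (S : Set Γ) hS)
      {B : Set Γ | ∃ (g : Γ) (P : Subgroup Γ), P ∈ 𝓐 ∧ B = leftCosetSet g P}

/-- `X` is relatively hyperbolic with respect to some family of flats. -/
def RelHypWrtFlats (X : Type*) [MetricSpace X] : Prop :=
  ∃ 𝓕 : Set (Set X), (∀ F ∈ 𝓕, IsFlat F) ∧ RelativelyHyperbolicSpace X 𝓕

/-! ## The space of flats, (IF1), parallel sets -/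

/-- The set of all flats in `X`. -/
abbrev Flats (X : Type*) [MetricSpace X] := {F : Set X // IsFlat F}

/-- The topology of Hausdorff convergence on bounded sets on the space of flats of `X`. -/
def flatsTopology (X : Type*) [MetricSpace X] : TopologicalSpace (Flats X) :=
  TopologicalSpace.generateFrom
    {U : Set (Flats X) | ∃ (C₀ : Set X) (x₀ : X) (r ε : ℝ), 0 < r ∧ 0 < ε ∧
      U = {C : Flats X | EMetric.hausdorffEdist (C.1 ∩ Metric.closedBall x₀ r)
            (C₀ ∩ Metric.closedBall x₀ r) < ENNReal.ofReal ε}}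

/-- Formulation (IF1) of isolated flats: there is a `Γ`-invariant family `𝓕` of flats
that is closed and isolated in the space of flats, and every flat of `X` lies in a
uniformly bounded tubular neighborhood of a member of `𝓕`. -/
def HasIF1 (Γ X : Type*) [Group Γ] [MetricSpace X] [MulAction Γ X] : Prop :=
  ∃ 𝓕 : Set (Set X),
    (∀ F ∈ 𝓕, IsFlat F) ∧
    (∀ (g : Γ), ∀ F ∈ 𝓕, g • F ∈ 𝓕) ∧
    @IsClosed (Flats X) (flatsTopology X) {F : Flats X | F.1 ∈ 𝓕} ∧
    (∀ F : Flats X, F.1 ∈ 𝓕 → ∃ U : Set (Flats X), @IsOpen (Flats X) (flatsTopology X) U ∧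
      U ∩ {F' : Flats X | F'.1 ∈ 𝓕} = {F}) ∧
    ∃ D : ℝ, ∀ F : Set X, IsFlat F → ∃ F' ∈ 𝓕, F ⊆ Metric.cthickening D F'

/-- The parallel set of a geodesic line `c`: the union of all geodesic lines at finite
Hausdorff distance from `c`. -/
def parallelSet {X : Type*} [MetricSpace X] (c : ℝ → X) : Set X :=
  {x : X | ∃ c' : ℝ → X, IsGeodesicLine c' ∧
    EMetric.hausdorffEdist (Set.range c) (Set.range c') ≠ ⊤ ∧ x ∈ Set.range c'}

/-- `X` has thin parallel sets: the parallel set of every geodesic line in a maximal flat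
`F` lies in a finite tubular neighborhood of `F`. -/
def HasThinParallelSets (X : Type*) [MetricSpace X] : Prop :=
  ∀ c : ℝ → X, IsGeodesicLine c → ∀ F : Set X, IsMaximalFlat F → Set.range c ⊆ F →
    ∃ r : ℝ, parallelSet c ⊆ Metric.cthickening r F

/-- `X` has uniformly thin parallel sets: thin parallel sets with a uniform bound on the
thickness of the tubular neighborhoods. -/
def HasUniformlyThinParallelSets (X : Type*) [MetricSpace X] : Prop :=
  ∃ r : ℝ, ∀ c : ℝ → X, IsGeodesicLine c → ∀ F : Set X, IsMaximalFlat F → Set.range c ⊆ F →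
    parallelSet c ⊆ Metric.cthickening r F

/-- `X` has slim parallel sets: the Tits boundary of the parallel set of every geodesic
line in a maximal flat `F` equals the Tits boundary of `F`. -/
def HasSlimParallelSets (X : Type*) [MetricSpace X] : Prop :=
  ∀ c : ℝ → X, IsGeodesicLine c → ∀ F : Set X, IsMaximalFlat F → Set.range c ⊆ F →
    boundaryOfSet (parallelSet c) = boundaryOfSet F

/-! ## Quasi-isometric embeddings, quasigeodesics, fellow travelling -/

/-- An `(L,C)`-quasi-isometric embedding. -/
def QIEmbedding {Y X : Type*} [MetricSpace Y] [MetricSpace X] (L C : ℝ) (f : Y → X) : Prop :=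
  ∀ y y' : Y, (1/L) * dist y y' - C ≤ dist (f y) (f y') ∧
    dist (f y) (f y') ≤ L * dist y y' + C

/-- A `(λ,ε)`-quasigeodesic, defined on the interval `[0,a]`. -/
def Quasigeodesic {X : Type*} [MetricSpace X] (lam eps : ℝ) (α : ℝ → X) (a : ℝ) : Prop :=
  ∀ s ∈ Set.Icc (0:ℝ) a, ∀ t ∈ Set.Icc (0:ℝ) a,
    (1/lam) * |s - t| - eps ≤ dist (α s) (α t) ∧ dist (α s) (α t) ≤ lam * |s - t| + eps

/-- Two paths `α : [0,a] → X` and `α' : [0,a'] → X` `L`-fellow travel relative to a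
sequence of flats. -/
def FellowTravelRelFlats {X : Type*} [MetricSpace X] (L : ℝ) (α α' : ℝ → X)
    (a a' : ℝ) : Prop :=
  ∃ (n : ℕ) (Fs : Fin n → Set X), (∀ i, IsFlat (Fs i)) ∧
  ∃ t s t' s' : Fin (n+1) → ℝ,
    t 0 = 0 ∧ s (Fin.last n) = a ∧ t' 0 = 0 ∧ s' (Fin.last n) = a' ∧
    (∀ i : Fin (n+1), t i ≤ s i) ∧ (∀ i : Fin n, s i.castSucc ≤ t i.succ) ∧
    (∀ i : Fin (n+1), t' i ≤ s' i) ∧ (∀ i : Fin n, s' i.castSucc ≤ t' i.succ) ∧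
    (∀ i : Fin (n+1),
      Metric.hausdorffDist (α '' Set.Icc (t i) (s i)) (α' '' Set.Icc (t' i) (s' i)) ≤ L) ∧
    (∀ i : Fin n,
      α '' Set.Icc (s i.castSucc) (t i.succ) ⊆ Metric.cthickening L (Fs i) ∧
      α' '' Set.Icc (s' i.castSucc) (t' i.succ) ⊆ Metric.cthickening L (Fs i))

/-! ## Quasiconvex and undistorted subgroups -/

/-- A quasiconvex subset of a geodesic space: all geodesics between its points stay in a
bounded neighborhood of it. -/
def QuasiconvexSubset {X : Type*} [MetricSpace X] (Y : Set X) : Prop :=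
  ∃ κ : ℝ, ∀ x ∈ Y, ∀ y ∈ Y, ∀ f : ℝ → X, IsGeodesicSegment f x y →
    ∀ t ∈ Set.Icc (0:ℝ) (dist x y), f t ∈ Metric.cthickening κ Y

/-- The orbit of a point under a subgroup. -/
def orbitSet {Γ X : Type*} [Group Γ] [MulAction Γ X] (H : Subgroup Γ) (x₀ : X) : Set X :=
  {x : X | ∃ h ∈ H, x = h • x₀}

/-- A subgroup `H ≤ Γ` is undistorted: the inclusion is a quasi-isometric embedding with
respect to word metrics. -/
def UndistortedSubgroup {Γ : Type*} [Group Γ] (H : Subgroup Γ) : Prop :=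
  ∃ (S : Finset Γ) (T : Finset H),
    Subgroup.closure (S : Set Γ) = ⊤ ∧ Subgroup.closure (T : Set H) = ⊤ ∧
    ∃ L C : ℝ, 0 < L ∧ 0 ≤ C ∧ ∀ h h' : H,
      (1/L) * (wordLength ((T : Set H)) (h⁻¹ * h') : ℝ) - C ≤
          (wordLength ((S : Set Γ)) ((h : Γ)⁻¹ * (h' : Γ)) : ℝ) ∧
        (wordLength ((S : Set Γ)) ((h : Γ)⁻¹ * (h' : Γ)) : ℝ) ≤
          L * (wordLength ((T : Set H)) (h⁻¹ * h') : ℝ) + C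
/-! ## Biautomatic groups -/

section Biautomatic

variable {Γ : Type*} [Group Γ]

/-- The group element represented by a word in the generators. -/
def wordProd {A : Finset Γ} (w : List {x : Γ // x ∈ A}) : Γ :=
  (w.map Subtype.val).prod

/-- The path in `Γ` traced out by a word: at time `n` it is at the product of the first
`n` letters. -/
def wordPath {A : Finset Γ} (w : List {x : Γ // x ∈ A}) (n : ℕ) : Γ :=
  ((w.map Subtype.val).take n).prod

/-- A group is biautomatic if it admits a finite generating set `A` and a regular
language `L` over `A` surjecting onto the group, whose paths satisfy the two-sided
`k`-fellow traveller property. -/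
def Biautomatic (Γ : Type*) [Group Γ] : Prop :=
  ∃ A : Finset Γ, Subgroup.closure (A : Set Γ) = ⊤ ∧
    ∃ L : Language {x : Γ // x ∈ A}, L.IsRegular ∧
      (∀ g : Γ, ∃ w ∈ L, wordProd w = g) ∧
      ∃ k : ℕ, ∀ (a : {x : Γ // x ∈ A}) (u v : List {x : Γ // x ∈ A}),
        u ∈ L → v ∈ L →
        (wordProd u = wordProd v * a.1 →
          ∀ n : ℕ, wordLength (A : Set Γ) ((wordPath u n)⁻¹ * wordPath v n) ≤ k) ∧
        (wordProd u = a.1 * wordProd v →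
          ∀ n : ℕ, wordLength (A : Set Γ) ((wordPath u n)⁻¹ * (a.1 * wordPath v n)) ≤ k)

end Biautomatic

/-! ## The cone topology on the ideal boundary, and the boundary action -/

/-- The topology of uniform convergence on compact sets on the space of geodesic rays
(since rays are `1`-Lipschitz this coincides with the topology of pointwise
convergence). -/
def raysTopology (X : Type*) [MetricSpace X] : TopologicalSpace (GeodesicRays X) :=
  TopologicalSpace.induced (fun c : GeodesicRays X => (c.1 : ℝ → X)) Pi.topologicalSpace

/-- The cone topology on the ideal boundary of a proper CAT(0) space: the quotient of the
topology of uniform convergence on compact sets on the space of geodesic rays. -/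
def coneTopologyBoundary (X : Type*) [MetricSpace X] : TopologicalSpace (IdealBoundary X) :=
  TopologicalSpace.coinduced (Quotient.mk (asympSetoid X)) (raysTopology X)

/-- The induced action of an isometric group action on the ideal boundary. -/
def boundarySMul {Γ X : Type*} [Group Γ] [MetricSpace X] [MulAction Γ X]
    (hiso : ∀ g : Γ, Isometry fun x : X => g • x) (g : Γ) :
    IdealBoundary X → IdealBoundary X :=
  Quotient.lift
    (fun c : GeodesicRays X => Quotient.mk (asympSetoid X)
      (⟨fun t => g • c.1 t, fun s t hs ht => by
        simpa using (hiso g).dist_eq (c.1 s) (c.1 t) ▸ c.2 s t hs ht⟩ : GeodesicRays X))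
    (by
      rintro c c' ⟨K, hK⟩
      apply Quot.sound
      exact ⟨K, fun t ht => by
        simpa using ((hiso g).dist_eq (c.1 t) (c'.1 t)) ▸ hK t ht⟩)

/-! ## Flat half-planes and flat sectors -/

/-- A flat half-plane meeting `F` orthogonally: an isometrically embedded Euclidean
half-plane whose boundary line lies in `F` and which leaves `F` at angle `π/2`. -/
def FlatHalfPlaneOrthogonal {Y : Type*} [MetricSpace Y] (F : Set Y) : Prop :=
  ∃ h : {v : EuclideanSpace ℝ (Fin 2) // 0 ≤ v 1} → Y,
    Isometry h ∧
    (∀ v : {v : EuclideanSpace ℝ (Fin 2) // 0 ≤ v 1}, v.1 1 = 0 → h v ∈ F) ∧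
    ∀ (v : {v : EuclideanSpace ℝ (Fin 2) // 0 ≤ v 1}) (hv : v.1 1 = 0),
      ∀ y ∈ F, y ≠ h v → ∀ t : ℝ, ∀ ht : 0 < t,
        angle (h v) (h ⟨(v.1 + EuclideanSpace.single 1 t : EuclideanSpace ℝ (Fin 2)), by
          have h1 : (v.1 + EuclideanSpace.single 1 t : EuclideanSpace ℝ (Fin 2)) 1
              = v.1 1 + t := by
            simp [EuclideanSpace.single_apply]
          rw [h1, hv, zero_add]; exact ht.le⟩) y = π / 2

/-- The model Euclidean sector of angle `θ`: the convex region of `E²` bounded by two rays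
from the origin making angle `θ`. -/
def modelSector (θ : ℝ) : Set (EuclideanSpace ℝ (Fin 2)) :=
  {v | ∃ r φ : ℝ, 0 ≤ r ∧ 0 ≤ φ ∧ φ ≤ θ ∧ v 0 = r * Real.cos φ ∧ v 1 = r * Real.sin φ}

/-- A flat sector of angle `θ` in `X`: an isometrically embedded copy of the model
Euclidean sector of angle `θ`. -/
def IsFlatSector {X : Type*} [MetricSpace X] (θ : ℝ) (S : Set X) : Prop :=
  ∃ f : {v : EuclideanSpace ℝ (Fin 2) // v ∈ modelSector θ} → X,
    Isometry f ∧ Set.range f = S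

/-! ## The space of directions at a point -/

section Directions

variable {Y : Type*} [MetricSpace Y]

/-- Two points determine the same direction at `p` when the angle at `p` between them
vanishes.  (In a CAT(0) space this relation is already an equivalence relation; we take
the generated equivalence relation.) -/
def dirSetoid (p : Y) : Setoid {z : Y // z ≠ p} :=
  Relation.EqvGen.setoid (fun q q' => angle p q.1 q'.1 = 0)

/-- The space of directions at `p`: germs at `p` of geodesics emanating from `p`. -/
def SpaceOfDirections (p : Y) := Quotient (dirSetoid p)

/-- The direction at `p` pointing towards `y`. -/
def dirOf (p : Y) (y : Y) (h : y ≠ p) : SpaceOfDirections p :=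
  Quotient.mk (dirSetoid p) ⟨y, h⟩

/-- The angle between two directions at `p`. -/
def dirAngle {p : Y} (d d' : SpaceOfDirections p) : ℝ :=
  angle p d.out.1 d'.out.1

/-- The topology on the space of directions induced by the angle metric. -/
def dirTopology (p : Y) : TopologicalSpace (SpaceOfDirections p) :=
  TopologicalSpace.generateFrom
    {U | ∃ (d : SpaceOfDirections p) (ε : ℝ), U = {d' | dirAngle d d' < ε}}

/-- `Σ_p F`: the set of directions at `p` pointing into a subset `F`. -/
def dirSet (p : Y) (F : Set Y) : Set (SpaceOfDirections p) :=
  {d | ∃ (q : Y) (hq : q ≠ p), q ∈ F ∧ dirOf p q hq = d}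

end Directions

/-! ## STATEMENT 12: first variation of angles along a geodesic -/

/-!
By the CN inequality `s ↦ d(w, c(s))² - s²` is midpoint convex, hence convex, along a geodesic `c`;
this makes comparison angles monotone and gives `∠̄_p(x,z) + ∠̄_p(y,z) ≥ π` for `p` inside `[x,y]`.

The comparison triangle on `x, c(t), z` has angles `A = ∠̄_x(c(t),z)` and `B = ∠̄_{c(t)}(x,z)`.
Projecting it to the side from `x` to `c(t)` gives `t = d(x,z) cos A + d(c(t),z) cos B`, and
`A → ∠_x(y,z)`, so `B → π - ∠_x(y,z)`. As the angle is at most the comparison angle, only a lower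
bound remains, and for fixed `s` and `t → 0`
`∠_{c(t)}(x,z) ≥ π - ∠̄_{c(t)}(c(s),z) → π - ∠̄_x(c(s),z)`, which is close to `π - ∠_x(y,z)` for
small `s`.
-/

open scoped Topology

section MidpointConvex

-- At a maximum `m`, reflecting the nearer endpoint in `m` stays in the interval.
theorem nonpos_of_midpoint_le {g : ℝ → ℝ} {a b : ℝ} (hg : ContinuousOn g (Icc a b))
    (hmid : ∀ s ∈ Icc a b, ∀ t ∈ Icc a b, g (midpoint ℝ s t) ≤ (g s + g t) / 2)
    (ha : g a ≤ 0) (hb : g b ≤ 0) {s : ℝ} (hs : s ∈ Icc a b) : g s ≤ 0 := by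
  have hab : a ≤ b := hs.1.trans hs.2
  obtain ⟨m, hm, hmax⟩ := isCompact_Icc.exists_isMaxOn (nonempty_Icc.2 hab) hg
  suffices hgm : g m ≤ 0 from (hmax hs).trans hgm
  have nonpos_of_reflection : ∀ e ∈ Icc a b, g e ≤ 0 → 2 * m - e ∈ Icc a b → g m ≤ 0 := by
    intro e he hge hr
    have hmid_m := hmid e he _ hr
    rw [show midpoint ℝ e (2 * m - e) = m by simp [midpoint_eq_smul_add]] at hmid_m
    have hle : g (2 * m - e) ≤ g m := hmax hr
    linarith
  rcases le_total (m - a) (b - m) with h | h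
  · exact nonpos_of_reflection a (left_mem_Icc.2 hab) ha ⟨by linarith [hm.1], by linarith⟩
  · exact nonpos_of_reflection b (right_mem_Icc.2 hab) hb ⟨by linarith, by linarith [hm.2]⟩

theorem convexOn_of_midpoint_le {E : Type*} [AddCommGroup E] [Module ℝ E] [TopologicalSpace E]
    [ContinuousAdd E] [ContinuousSMul ℝ E] {S : Set E} {f : E → ℝ} (hS : Convex ℝ S)
    (hf : ContinuousOn f S)
    (hmid : ∀ u ∈ S, ∀ v ∈ S, f (midpoint ℝ u v) ≤ (f u + f v) / 2) : ConvexOn ℝ S f := by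
  refine ⟨hS, fun u hu v hv a b ha hb hab => ?_⟩
  let γ : ℝ → E := fun r => (1 - r) • u + r • v
  let g : ℝ → ℝ := fun r => f (γ r) - ((1 - r) * f u + r * f v)
  have hγ : MapsTo γ (Icc 0 1) S := fun r hr =>
    hS hu hv (sub_nonneg.2 hr.2) hr.1 (sub_add_cancel 1 r)
  have hγ_mid : ∀ r r', γ (midpoint ℝ r r') = midpoint ℝ (γ r) (γ r') := by
    intro r r'
    simp only [γ, midpoint_eq_smul_add, invOf_eq_inv, smul_eq_mul]
    module
  have hg : ContinuousOn g (Icc 0 1) :=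
    (hf.comp (by fun_prop : Continuous γ).continuousOn hγ).sub (by fun_prop)
  have hg_mid : ∀ r ∈ Icc (0 : ℝ) 1, ∀ r' ∈ Icc (0 : ℝ) 1,
      g (midpoint ℝ r r') ≤ (g r + g r') / 2 := by
    intro r hr r' hr'
    have h := hmid _ (hγ hr) _ (hγ hr')
    rw [← hγ_mid] at h
    simp only [g, midpoint_eq_smul_add, invOf_eq_inv, smul_eq_mul] at h ⊢
    linarith
  have hgb : g b ≤ 0 := nonpos_of_midpoint_le hg hg_mid (by simp [g, γ]) (by simp [g, γ])
    ⟨hb, by linarith⟩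
  obtain rfl : a = 1 - b := by linarith
  simpa only [g, γ, sub_nonpos, smul_eq_mul] using hgb

end MidpointConvex

section Metric

variable [MetricSpace X] {p x x' y y' z : X} {f : ℝ → X}

theorem right_mem_geodesicSegSet (x y : X) : y ∈ geodesicSegSet x y := by
  simp [geodesicSegSet]

theorem ne_left_of_mem_geodesicSegSet (h : x' ∈ geodesicSegSet p x) (hx' : x' ≠ p) : x ≠ p := by
  rintro rfl
  have h : dist x x' + dist x' x = dist x x := h
  rw [dist_comm x' x, dist_self] at h
  exact hx' (dist_eq_zero.1 (by linarith)).symm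

theorem mem_geodesicSegSet_of_mem_left (hp : p ∈ geodesicSegSet x y)
    (hx' : x' ∈ geodesicSegSet p x) : p ∈ geodesicSegSet x' y := by
  have hp : dist x p + dist p y = dist x y := hp
  have hx' : dist p x' + dist x' x = dist p x := hx'
  refine le_antisymm ?_ (dist_triangle _ _ _)
  linarith [dist_triangle x x' y, dist_comm p x', dist_comm p x, dist_comm x x']

namespace IsGeodesicSegment

theorem dist_left (hf : IsGeodesicSegment f x y) {s : ℝ} (hs : s ∈ Icc 0 (dist x y)) :
    dist x (f s) = s := by
  rw [← hf.1, hf.2.2 0 ⟨le_rfl, dist_nonneg⟩ s hs, zero_sub, abs_neg, abs_of_nonneg hs.1]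

theorem continuousOn (hf : IsGeodesicSegment f x y) : ContinuousOn f (Icc 0 (dist x y)) :=
  (LipschitzOnWith.of_dist_le_mul (K := 1) fun s hs t ht => by
    rw [hf.2.2 s hs t ht, Real.dist_eq, NNReal.coe_one, one_mul]).continuousOn

theorem tendsto_left (hf : IsGeodesicSegment f x y) (hxy : x ≠ y) :
    Tendsto f (𝓝[>] 0) (𝓝 x) := by
  have h := hf.continuousOn 0 ⟨le_rfl, dist_nonneg⟩
  rw [continuousWithinAt_Icc_iff_Ici (dist_pos.2 hxy), ContinuousWithinAt, hf.1] at h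
  exact h.mono_left (nhdsWithin_mono 0 Ioi_subset_Ici_self)

theorem mem_geodesicSegSet (hf : IsGeodesicSegment f x y) {s t : ℝ} (hs : 0 ≤ s) (hst : s ≤ t)
    (ht : t ≤ dist x y) : f s ∈ geodesicSegSet x (f t) := by
  have hs' : s ∈ Icc 0 (dist x y) := ⟨hs, hst.trans ht⟩
  have ht' : t ∈ Icc 0 (dist x y) := ⟨hs.trans hst, ht⟩
  change dist x (f s) + dist (f s) (f t) = dist x (f t)
  rw [hf.dist_left hs', hf.dist_left ht', hf.2.2 s hs' t ht', abs_sub_comm,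
    abs_of_nonneg (sub_nonneg.2 hst), add_sub_cancel]

theorem apply_ne_apply (hf : IsGeodesicSegment f x y) {s t : ℝ} (hs : s ∈ Icc 0 (dist x y))
    (ht : t ∈ Icc 0 (dist x y)) (hst : s ≠ t) : f s ≠ f t := by
  rw [← dist_pos, hf.2.2 s hs t ht]
  exact abs_sub_pos.2 hst

theorem apply_ne_left (hf : IsGeodesicSegment f x y) {s : ℝ} (hs : s ∈ Ioc 0 (dist x y)) :
    f s ≠ x := by
  rw [ne_comm, ← dist_pos, hf.dist_left (Ioc_subset_Icc_self hs)]
  exact hs.1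

end IsGeodesicSegment

theorem abs_law_of_cosines_le_one (p x y : X) :
    |(dist p x ^ 2 + dist p y ^ 2 - dist x y ^ 2) / (2 * dist p x * dist p y)| ≤ 1 := by
  rw [abs_div, abs_of_nonneg (a := 2 * dist p x * dist p y) (by positivity)]
  refine div_le_one_of_le₀ (abs_le.2 ⟨?_, ?_⟩) (by positivity)
  · have h : dist x y ≤ dist p x + dist p y := dist_triangle_left x y p
    nlinarith [dist_nonneg (x := x) (y := y)]
  · have h : |dist p x - dist p y| ≤ dist x y := by
      simpa only [dist_comm p] using abs_dist_sub_le x y p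
    linarith [sq_le_sq' (abs_le.1 h).1 (abs_le.1 h).2]

theorem cos_cangle (p x y : X) : cos (cangle p x y) =
    (dist p x ^ 2 + dist p y ^ 2 - dist x y ^ 2) / (2 * dist p x * dist p y) :=
  cos_arccos (abs_le.1 (abs_law_of_cosines_le_one p x y)).1
    (abs_le.1 (abs_law_of_cosines_le_one p x y)).2

theorem cangle_nonneg (p x y : X) : 0 ≤ cangle p x y := arccos_nonneg _

theorem cangle_le_pi (p x y : X) : cangle p x y ≤ π := arccos_le_pi _

theorem arccos_cos_cangle (p x y : X) : arccos (cos (cangle p x y)) = cangle p x y :=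
  arccos_cos (cangle_nonneg p x y) (cangle_le_pi p x y)

theorem cangle_comm (p x y : X) : cangle p x y = cangle p y x := by
  rw [cangle, cangle, dist_comm x y, add_comm (dist p x ^ 2), mul_right_comm]

theorem tendsto_cangle {ι : Type*} {l : Filter ι} {u v w : ι → X} (hu : Tendsto u l (𝓝 p))
    (hv : Tendsto v l (𝓝 x)) (hw : Tendsto w l (𝓝 y)) (hx : x ≠ p) (hy : y ≠ p) :
    Tendsto (fun i => cangle (u i) (v i) (w i)) l (𝓝 (cangle p x y)) := by
  have hpx : 0 < dist p x := dist_pos.2 hx.symm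
  have hpy : 0 < dist p y := dist_pos.2 hy.symm
  refine (continuous_arccos.tendsto _).comp (Tendsto.div ?_ ?_ (by positivity))
  · exact (((hu.dist hv).pow 2).add ((hu.dist hw).pow 2)).sub ((hv.dist hw).pow 2)
  · exact ((hu.dist hv).const_mul 2).mul (hu.dist hw)

theorem dist_mul_cos_cangle_add (hx : x ≠ p) (hzp : z ≠ p) (hzx : z ≠ x) :
    dist p z * cos (cangle p x z) + dist x z * cos (cangle x p z) = dist p x := by
  have hpx : 0 < dist p x := dist_pos.2 hx.symm
  have hpz : 0 < dist p z := dist_pos.2 hzp.symm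
  have hxz : 0 < dist x z := dist_pos.2 hzx.symm
  rw [cos_cangle, cos_cangle, dist_comm x p]
  field_simp
  ring

theorem cos_cangle_sub_le_of_mem (hy' : y' ∈ geodesicSegSet p y) (hy'p : y' ≠ p) (hx : x ≠ p) :
    cos (cangle p x y') - dist p x / (2 * dist p y') ≤ cos (cangle p x y) := by
  have hpx : 0 < dist p x := dist_pos.2 hx.symm
  have hpy' : 0 < dist p y' := dist_pos.2 hy'p.symm
  have hpy : 0 < dist p y := dist_pos.2 (ne_left_of_mem_geodesicSegSet hy' hy'p).symm
  have near : cos (cangle p x y') - dist p x / (2 * dist p y') ≤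
      (dist p y' - dist x y') / dist p x := by
    rw [cos_cangle, sub_le_iff_le_add, div_add_div _ _ hpx.ne' (by positivity),
      div_le_div_iff₀ (by positivity) (by positivity)]
    nlinarith [mul_nonneg (mul_pos hpx hpy').le (sq_nonneg (dist p y' - dist x y'))]
  have far : (dist p y - dist x y) / dist p x ≤ cos (cangle p x y) := by
    have h : |dist p y - dist x y| ≤ dist p x := abs_dist_sub_le p x y
    have hsq := sq_le_sq' (abs_le.1 h).1 (abs_le.1 h).2
    rw [cos_cangle, div_le_div_iff₀ hpx (by positivity)]
    nlinarith
  have between : dist p y' - dist x y' ≤ dist p y - dist x y := by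
    have hy' : dist p y' + dist y' y = dist p y := hy'
    linarith [dist_triangle x y' y]
  calc _ ≤ (dist p y' - dist x y') / dist p x := near
    _ ≤ (dist p y - dist x y) / dist p x := by gcongr
    _ ≤ _ := far

theorem angle_nonneg (p x y : X) : 0 ≤ angle p x y := by
  refine Real.sInf_nonneg ?_
  rintro _ ⟨x', -, y', -, -, -, rfl⟩
  exact cangle_nonneg p x' y'

theorem angle_le_cangle_of_mem (hx' : x' ∈ geodesicSegSet p x) (hy' : y' ∈ geodesicSegSet p y)
    (hx'p : x' ≠ p) (hy'p : y' ≠ p) : angle p x y ≤ cangle p x' y' := by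
  refine csInf_le ⟨0, ?_⟩ ⟨x', hx', y', hy', hx'p, hy'p, rfl⟩
  rintro _ ⟨u, -, v, -, -, -, rfl⟩
  exact cangle_nonneg p u v

theorem angle_le_cangle (hx : x ≠ p) (hy : y ≠ p) : angle p x y ≤ cangle p x y :=
  angle_le_cangle_of_mem (right_mem_geodesicSegSet p x) (right_mem_geodesicSegSet p y) hx hy

theorem le_angle (hx : x ≠ p) (hy : y ≠ p) {θ : ℝ}
    (h : ∀ x' ∈ geodesicSegSet p x, ∀ y' ∈ geodesicSegSet p y, x' ≠ p → y' ≠ p →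
      θ ≤ cangle p x' y') : θ ≤ angle p x y := by
  refine le_csInf
    ⟨_, x, right_mem_geodesicSegSet p x, y, right_mem_geodesicSegSet p y, hx, hy, rfl⟩ ?_
  rintro _ ⟨x', hx', y', hy', hx'p, hy'p, rfl⟩
  exact h x' hx' y' hy' hx'p hy'p

theorem exists_cangle_lt_of_angle_lt (hx : x ≠ p) (hy : y ≠ p) {θ : ℝ} (h : angle p x y < θ) :
    ∃ x' ∈ geodesicSegSet p x, ∃ y' ∈ geodesicSegSet p y,
      x' ≠ p ∧ y' ≠ p ∧ cangle p x' y' < θ := by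
  by_contra! hle
  exact h.not_ge (le_angle hx hy hle)

end Metric

section CAT0

variable [MetricSpace X] {p q x x' y y' z m : X} {f c : ℝ → X}

namespace CAT0Space

theorem convexOn_dist_sq_sub_sq (hX : CAT0Space X) (w : X) (hf : IsGeodesicSegment f p q) :
    ConvexOn ℝ (Icc 0 (dist p q)) fun s => dist w (f s) ^ 2 - s ^ 2 := by
  have hdist : ContinuousOn (fun s => dist w (f s)) (Icc 0 (dist p q)) :=
    (continuous_const.dist continuous_id).comp_continuousOn hf.continuousOn
  refine convexOn_of_midpoint_le (convex_Icc _ _) ((hdist.pow 2).sub (by fun_prop))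
    fun s hs t ht => ?_
  have hm : midpoint ℝ s t ∈ Icc 0 (dist p q) := (convex_Icc _ _).midpoint_mem hs ht
  have hCN := hX.2 w (f s) (f t) (f (midpoint ℝ s t))
    (by rw [hf.2.2 s hs _ hm, hf.2.2 s hs t ht, ← Real.dist_eq, dist_left_midpoint,
      Real.dist_eq, Real.norm_ofNat]; ring)
    (by rw [hf.2.2 t ht _ hm, hf.2.2 s hs t ht, ← Real.dist_eq, dist_right_midpoint,
      Real.dist_eq, Real.norm_ofNat]; ring)
  rw [hf.2.2 s hs t ht, sq_abs] at hCN
  have hmid : midpoint ℝ s t = (s + t) / 2 := by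
    rw [midpoint_eq_smul_add, invOf_eq_inv, smul_eq_mul]; ring
  rw [hmid] at hCN ⊢
  linarith

theorem stewart_of_isGeodesicSegment (hX : CAT0Space X) (w : X) (hf : IsGeodesicSegment f p q)
    {s : ℝ} (hs : s ∈ Icc 0 (dist p q)) :
    dist p q * dist w (f s) ^ 2 ≤ (dist p q - s) * dist w p ^ 2 + s * dist w q ^ 2
      - s * (dist p q - s) * dist p q := by
  rcases (dist_nonneg (x := p) (y := q)).eq_or_lt with h | h
  · obtain rfl : s = 0 := le_antisymm (hs.2.trans h.symm.le) hs.1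
    simp [← h]
  have hconv := (hX.convexOn_dist_sq_sub_sq w hf).2 ⟨le_rfl, h.le⟩ ⟨h.le, le_rfl⟩
    (div_nonneg (sub_nonneg.2 hs.2) h.le) (div_nonneg hs.1 h.le) (by field_simp; ring)
  simp only [smul_eq_mul, mul_zero, zero_add, div_mul_cancel₀ s h.ne', hf.1, hf.2.1] at hconv
  field_simp at hconv
  linarith

theorem apply_dist_left (hX : CAT0Space X) (hf : IsGeodesicSegment f p q)
    (hm : m ∈ geodesicSegSet p q) : f (dist p m) = m := by
  have hm : dist p m + dist m q = dist p q := hm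
  rcases eq_or_ne p q with rfl | hpq
  · obtain rfl : p = m := dist_eq_zero.1
      (by linarith [dist_self p, dist_comm m p])
    rw [dist_self, hf.1]
  have hle : dist p m ≤ dist p q := by linarith [dist_nonneg (x := m) (y := q)]
  have h := hX.stewart_of_isGeodesicSegment m hf ⟨dist_nonneg, hle⟩
  rw [← eq_sub_iff_add_eq'] at hm
  rw [dist_comm m p, hm] at h
  have hsq : dist m (f (dist p m)) ^ 2 ≤ 0 :=
    nonpos_of_mul_nonpos_right (by linarith) (dist_pos.2 hpq)
  exact (dist_eq_zero.1 (pow_eq_zero_iff two_ne_zero |>.1 (hsq.antisymm (sq_nonneg _)))).symm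

theorem stewart (hX : CAT0Space X) (w : X) (hm : m ∈ geodesicSegSet p q) :
    dist p q * dist w m ^ 2 ≤ dist m q * dist w p ^ 2 + dist p m * dist w q ^ 2
      - dist p m * dist m q * dist p q := by
  obtain ⟨f, hf⟩ := hX.1 p q
  have hmq : dist m q = dist p q - dist p m := eq_sub_of_add_eq' hm
  have h := hX.stewart_of_isGeodesicSegment w hf (s := dist p m)
    ⟨dist_nonneg, by linarith [dist_nonneg (x := m) (y := q)]⟩
  rwa [hX.apply_dist_left hf hm, ← hmq] at h

theorem cangle_le_of_mem_left (hX : CAT0Space X) (hx' : x' ∈ geodesicSegSet p x) (hx'p : x' ≠ p)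
    (hy : y ≠ p) : cangle p x' y ≤ cangle p x y := by
  have hpx : 0 < dist p x := dist_pos.2 (ne_left_of_mem_geodesicSegSet hx' hx'p).symm
  have hpx' : 0 < dist p x' := dist_pos.2 hx'p.symm
  have hpy : 0 < dist p y := dist_pos.2 hy.symm
  have h := hX.stewart y hx'
  rw [show dist x' x = dist p x - dist p x' from eq_sub_of_add_eq' hx', dist_comm y x',
    dist_comm y x, dist_comm y p] at h
  refine arccos_le_arccos ?_
  rw [div_le_div_iff₀ (by positivity) (by positivity)]
  linarith [mul_le_mul_of_nonneg_left h hpy.le]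

theorem cangle_le_of_mem_right (hX : CAT0Space X) (hy' : y' ∈ geodesicSegSet p y) (hy'p : y' ≠ p)
    (hx : x ≠ p) : cangle p x y' ≤ cangle p x y := by
  rw [cangle_comm p x y', cangle_comm p x y]
  exact hX.cangle_le_of_mem_left hy' hy'p hx

theorem pi_le_cangle_add_cangle (hX : CAT0Space X) (hp : p ∈ geodesicSegSet x y) (hx : x ≠ p)
    (hy : y ≠ p) (hz : z ≠ p) : π ≤ cangle p x z + cangle p y z := by
  have hpx : 0 < dist p x := dist_pos.2 hx.symm
  have hpy : 0 < dist p y := dist_pos.2 hy.symm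
  have hpz : 0 < dist p z := dist_pos.2 hz.symm
  have h := hX.stewart z hp
  rw [← show dist x p + dist p y = dist x y from hp, dist_comm x p, dist_comm z p, dist_comm z x,
    dist_comm z y] at h
  rw [← sub_le_iff_le_add, cangle, cangle, ← arccos_neg]
  refine arccos_le_arccos ?_
  rw [← neg_div, div_le_div_iff₀ (by positivity) (by positivity)]
  linarith [mul_le_mul_of_nonneg_left h hpz.le]

theorem pi_sub_cangle_le_angle (hX : CAT0Space X) (hp : p ∈ geodesicSegSet x y) (hx : x ≠ p)
    (hy : y ≠ p) (hz : z ≠ p) : π - cangle p y z ≤ angle p x z := by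
  refine le_angle hx hz fun x' hx' z' hz' hx'p hz'p => ?_
  have hpx' : p ∈ geodesicSegSet x' y := mem_geodesicSegSet_of_mem_left hp hx'
  linarith [hX.pi_le_cangle_add_cangle hpx' hx'p hy hz'p, hX.cangle_le_of_mem_right hz' hz'p hy]

theorem tendsto_cangle_left_endpoint (hX : CAT0Space X) (hc : IsGeodesicSegment c x y) (hxy : x ≠ y)
    (hxz : x ≠ z) : Tendsto (fun s => cangle x (c s) z) (𝓝[>] 0) (𝓝 (angle x y z)) := by
  have hpos : 0 < dist x y := dist_pos.2 hxy
  refine tendsto_order.2 ⟨fun b hb => ?_, fun b hb => ?_⟩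
  · filter_upwards [Ioc_mem_nhdsGT hpos] with s hs
    have hcs : c s ∈ geodesicSegSet x y := by
      simpa only [hc.2.1] using hc.mem_geodesicSegSet hs.1.le hs.2 le_rfl
    exact hb.trans_le (angle_le_cangle_of_mem hcs (right_mem_geodesicSegSet x z)
      (hc.apply_ne_left hs) hxz.symm)
  obtain ⟨x', hx', z', hz', hx'x, hz'x, hlt⟩ := exists_cangle_lt_of_angle_lt hxy.symm hxz.symm hb
  have hlim : Tendsto (fun s => arccos (cos (cangle x x' z') - s / (2 * dist x z'))) (𝓝[>] 0)
      (𝓝 (cangle x x' z')) := by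
    have h : Continuous fun s : ℝ => arccos (cos (cangle x x' z') - s / (2 * dist x z')) := by
      fun_prop
    have h0 := h.tendsto 0
    rw [zero_div, sub_zero, arccos_cos_cangle] at h0
    exact h0.mono_left nhdsWithin_le_nhds
  filter_upwards [hlim.eventually_lt_const hlt, Ioc_mem_nhdsGT (dist_pos.2 hx'x.symm)]
    with s hsb hs
  have hx'y : dist x x' ≤ dist x y := by
    linarith [dist_nonneg (x := x') (y := y), show dist x x' + dist x' y = dist x y from hx']
  have hsI : s ∈ Ioc 0 (dist x y) := ⟨hs.1, hs.2.trans hx'y⟩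
  have hcs : c s ∈ geodesicSegSet x x' := by
    simpa only [hX.apply_dist_left hc hx'] using hc.mem_geodesicSegSet hs.1.le hs.2 hx'y
  have hcsx : c s ≠ x := hc.apply_ne_left hsI
  have hmono : cos (cangle x x' z') ≤ cos (cangle x (c s) z') :=
    cos_le_cos_of_nonneg_of_le_pi (cangle_nonneg _ _ _) (cangle_le_pi _ _ _)
      (hX.cangle_le_of_mem_left hcs hcsx hz'x)
  have hvar := cos_cangle_sub_le_of_mem hz' hz'x hcsx
  rw [hc.dist_left (Ioc_subset_Icc_self hsI)] at hvar
  calc cangle x (c s) z = arccos (cos (cangle x (c s) z)) :=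
        (arccos_cos_cangle x (c s) z).symm
    _ ≤ arccos (cos (cangle x x' z') - s / (2 * dist x z')) := arccos_le_arccos (by linarith)
    _ < b := hsb

theorem tendsto_cangle_along_geodesic (hX : CAT0Space X) (hc : IsGeodesicSegment c x y)
    (hxy : x ≠ y) (hxz : x ≠ z) :
    Tendsto (fun t => cangle (c t) x z) (𝓝[>] 0) (𝓝 (π - angle x y z)) := by
  have hL : dist x z ≠ 0 := (dist_pos.2 hxz).ne'
  have hdist : Tendsto (fun t => dist (c t) z) (𝓝[>] 0) (𝓝 (dist x z)) :=
    (hc.tendsto_left hxy).dist tendsto_const_nhds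
  have hcos : Tendsto (fun t => cos (cangle x (c t) z)) (𝓝[>] 0) (𝓝 (cos (angle x y z))) :=
    (continuous_cos.tendsto _).comp (hX.tendsto_cangle_left_endpoint hc hxy hxz)
  have hquot : Tendsto (fun t => (t - dist x z * cos (cangle x (c t) z)) / dist (c t) z) (𝓝[>] 0)
      (𝓝 (-cos (angle x y z))) := by
    have hid : Tendsto (fun t : ℝ => t) (𝓝[>] 0) (𝓝 0) := nhdsWithin_le_nhds
    have h := (hid.sub (hcos.const_mul (dist x z))).div hdist hL
    rwa [zero_sub, neg_div, mul_div_cancel_left₀ _ hL] at h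
  have harccos := (continuous_arccos.tendsto _).comp hquot
  rw [arccos_neg, arccos_cos (angle_nonneg x y z)
    ((angle_le_cangle hxy.symm hxz.symm).trans (cangle_le_pi x y z))] at harccos
  refine harccos.congr' ?_
  filter_upwards [Ioc_mem_nhdsGT (dist_pos.2 hxy),
    (hc.tendsto_left hxy).eventually_ne hxz] with t ht hctz
  have hproj := dist_mul_cos_cangle_add (hc.apply_ne_left ht) hxz.symm hctz.symm
  rw [hc.dist_left (Ioc_subset_Icc_self ht)] at hproj
  rw [Function.comp_apply, ← eq_sub_of_add_eq' hproj,
    mul_div_cancel_left₀ _ (dist_pos.2 hctz).ne', arccos_cos_cangle]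

theorem eventually_lt_angle_along_geodesic (hX : CAT0Space X) (hc : IsGeodesicSegment c x y)
    (hxy : x ≠ y) (hxz : x ≠ z) {b : ℝ} (hb : b < π - angle x y z) :
    ∀ᶠ t in 𝓝[>] 0, b < angle (c t) x z := by
  obtain ⟨s, hsb, hs⟩ := (((hX.tendsto_cangle_left_endpoint hc hxy hxz).eventually_lt_const
    (lt_sub_comm.1 hb)).and (Ioc_mem_nhdsGT (dist_pos.2 hxy))).exists
  have hlim : Tendsto (fun t => cangle (c t) (c s) z) (𝓝[>] 0) (𝓝 (cangle x (c s) z)) :=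
    tendsto_cangle (hc.tendsto_left hxy) tendsto_const_nhds tendsto_const_nhds
      (hc.apply_ne_left hs) hxz.symm
  filter_upwards [hlim.eventually_lt_const hsb, Ioo_mem_nhdsGT hs.1,
    (hc.tendsto_left hxy).eventually_ne hxz] with t htb ht hctz
  have htI : t ∈ Ioc 0 (dist x y) := ⟨ht.1, ht.2.le.trans hs.2⟩
  have hcst : c s ≠ c t :=
    hc.apply_ne_apply (Ioc_subset_Icc_self hs) (Ioc_subset_Icc_self htI) ht.2.ne'
  have hangle := hX.pi_sub_cangle_le_angle (hc.mem_geodesicSegSet ht.1.le ht.2.le hs.2)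
    (hc.apply_ne_left htI).symm hcst hctz.symm
  linarith

end CAT0Space

end CAT0

/-- **Lemma.** Let `x, y, z` be points of a CAT(0) space with `x ≠ y`, `x ≠ z`, and let
`c` parametrize the geodesic `[x,y]` with `c 0 = x`.  Then as `t → 0⁺` both the angle and
the comparison angle `∠_{c(t)}(x,z)` tend to `π − ∠_x(y,z)`. -/
theorem angle_limit_along_geodesic
    {X : Type*} [MetricSpace X] (hX : CAT0Space X)
    (x y z : X) (hxy : x ≠ y) (hxz : x ≠ z)
    (c : ℝ → X) (hc : IsGeodesicSegment c x y) :
    Filter.Tendsto (fun t => angle (c t) x z) (nhdsWithin 0 (Set.Ioi 0))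
        (nhds (π - angle x y z)) ∧
      Filter.Tendsto (fun t => cangle (c t) x z) (nhdsWithin 0 (Set.Ioi 0))
        (nhds (π - angle x y z)) := by
  have hcangle := hX.tendsto_cangle_along_geodesic hc hxy hxz
  refine ⟨tendsto_order.2 ⟨fun b hb => hX.eventually_lt_angle_along_geodesic hc hxy hxz hb,
    fun b hb => ?_⟩, hcangle⟩
  filter_upwards [hcangle.eventually_lt_const hb, Ioc_mem_nhdsGT (dist_pos.2 hxy),
    (hc.tendsto_left hxy).eventually_ne hxz] with t htb ht hctz
  exact (angle_le_cangle (hc.apply_ne_left ht).symm hctz.symm).trans_lt htb
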